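/- arXiv:1208.1374 — 2 statements merged into one kernel-verified Lean document; each statement's English description precedes it below -/
import Mathlib

section
/- Let n ≥ 1 and let V_j for j ≥ 1 be the operators V_j = (1/4n)Σ_{k+l=2nj} ∂²/∂t_k∂t_l + (1/2n)Σ_{k odd>0} k t_k ∂/∂t_{k+2nj} on the polynomial ring in variables t_k (k positive odd). Then [V_i, V_j] = (i-j)V_{i+j} for all i, j ≥ 1. -/
/-!
The Virasoro operators `V_j` (`j ≥ 1`) acting on the polynomial ring in the
variables `t_k` (`k` a positive odd integer), realized as `MvPolynomial ℕ ℚ`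
with `X k` playing the role of `t_k` for odd `k`.  The infinite sums are
pointwise finite and are expressed with `∑ᶠ`.
-/

noncomputable section

open MvPolynomial

/-- `V_j = (1/4n) ∑_{k+l=2nj, k,l odd > 0} ∂²/∂t_k ∂t_l
      + (1/2n) ∑_{k odd > 0} k t_k ∂/∂t_{k+2nj}` for `j ≥ 1`. -/
def Vop (n j : ℕ) : MvPolynomial ℕ ℚ → MvPolynomial ℕ ℚ := fun f =>
  (1 / (4 * n) : ℚ) •
      (∑ k ∈ Finset.range (2 * n * j),
        if Odd k then pderiv k (pderiv (2 * n * j - k) f) else 0)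
    + (1 / (2 * n) : ℚ) •
      (∑ᶠ k : ℕ, if Odd k then (k : ℚ) • (X k * pderiv (k + 2 * n * j) f) else 0)

lemma der_sum (s : Finset ℕ) (D : ℕ → Derivation ℚ (MvPolynomial ℕ ℚ) (MvPolynomial ℕ ℚ))
    (f : MvPolynomial ℕ ℚ) : (∑ k ∈ s, D k) f = ∑ k ∈ s, D k f := by
  induction s using Finset.induction_on with
  | empty => simp
  | insert a s ha ih => rw [Finset.sum_insert ha, Finset.sum_insert ha, Derivation.add_apply, ih]

/-- The first-order part as a derivation. -/
def Dder (b : ℕ) : Derivation ℚ (MvPolynomial ℕ ℚ) (MvPolynomial ℕ ℚ) :=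
  mkDerivation ℚ (fun m => if Odd m ∧ b < m then ((m : ℚ) - b) • (X (m - b)) else 0)

lemma Dder_X (b m : ℕ) : Dder b (X m) =
    if Odd m ∧ b < m then ((m : ℚ) - b) • (X (m - b) : MvPolynomial ℕ ℚ) else 0 := by
  simp [Dder, mkDerivation_X]

lemma finsum_eq_Dder (b : ℕ) (hb : Even b) (f : MvPolynomial ℕ ℚ) :
    (∑ᶠ k : ℕ, if Odd k then (k : ℚ) • (X k * pderiv (k + b) f) else 0) = Dder b f := by
  obtain ⟨N, hN⟩ : ∃ N, ∀ m ∈ f.vars, m < N :=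
    ⟨f.vars.sup id + 1, fun m hm => Nat.lt_succ_of_le (Finset.le_sup (f := id) hm)⟩
  rw [finsum_eq_sum_of_support_subset (s := Finset.range N)]
  · have key : (∑ k ∈ Finset.range N, (if Odd k then (k : ℚ) • (X k : MvPolynomial ℕ ℚ) else 0) •
        pderiv (R := ℚ) (k + b)) f = Dder b f := by
      apply derivation_eq_of_forall_mem_vars
      intro m hm
      have hmN := hN m hm
      rw [Dder_X, der_sum]
      simp only [Derivation.smul_apply, pderiv_X, Pi.single_apply, smul_eq_mul]
      by_cases hbm : b ≤ m
      · obtain ⟨q, rfl⟩ := Nat.exists_eq_add_of_le' hbm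
        rw [Finset.sum_eq_single q]
        · have : Odd (q + b) ↔ Odd q := by
            rw [Nat.odd_add]; simp [hb]
          by_cases hq : Odd q
          · have : 0 < q := hq.pos
            simp [*]
          · simp [*]
        · intro k _ hk
          simp [hk, Ne.symm hk]
        · intro h; simp at h; omega
      · rw [if_neg (by omega)]
        apply Finset.sum_eq_zero
        intro k _
        have hne : m ≠ k + b := by omega
        simp [hne, Ne.symm hne]
    rw [← key, der_sum]
    apply Finset.sum_congr rfl
    intro k _
    split_ifs <;> simp
  · intro k hk
    by_contra h
    simp at h
    apply hk
    have : pderiv (k + b) f = 0 := by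
      apply pderiv_eq_zero_of_notMem_vars
      intro hm
      have := hN _ hm
      omega
    simp [this]

lemma pderiv_Dder (k b : ℕ) (hk : Odd k) (hb : Even b) (f : MvPolynomial ℕ ℚ) :
    pderiv k (Dder b f) = Dder b (pderiv k f) + (k : ℚ) • pderiv (k + b) f := by
  have h : ⁅pderiv (R := ℚ) k, Dder b⁆ = (k : ℚ) • pderiv (R := ℚ) (k + b) := by
    apply derivation_ext
    intro m
    rw [Derivation.commutator_apply, Dder_X, pderiv_X, Derivation.smul_apply, pderiv_X]
    have h1 : Dder b (Pi.single (M := fun _ => MvPolynomial ℕ ℚ) k 1 m) = 0 := by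
      rw [Pi.single_apply]; split_ifs <;> simp
    have h1' : Dder b (Pi.single (M := fun _ => MvPolynomial ℕ ℚ) m 1 k) = 0 := by
      rw [Pi.single_apply]; split_ifs <;> simp
    have hkb : Odd (k + b) := hk.add_even hb
    have := hk.pos
    by_cases hm : m = k + b
    · subst hm
      simp_all
    · have h2 : Odd m ∧ b < m → m - b ≠ k := by omega
      split_ifs with h3
      · have := h2 h3
        simp [pderiv_X, Pi.single_apply, hm, this] at *; exact h1
      · simp [Pi.single_apply, hm] at *; exact h1
  have := congrArg (fun D => D f) h
  simp only [Derivation.commutator_apply, Derivation.smul_apply] at this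
  rw [← this]; abel

lemma Dder_comm (a b : ℕ) (ha : Even a) (hb : Even b) (f : MvPolynomial ℕ ℚ) :
    Dder a (Dder b f) - Dder b (Dder a f) = ((a : ℚ) - b) • Dder (a + b) f := by
  have h : ⁅Dder a, Dder b⁆ = ((a : ℚ) - b) • Dder (a + b) := by
    apply derivation_ext
    intro m
    rw [Derivation.commutator_apply, Derivation.smul_apply]
    by_cases hm : Odd m
    · have key : ∀ a b : ℕ, Even b → Dder a (Dder b (X m)) =
          if a + b < m then (((m : ℚ) - b) * ((m : ℚ) - b - a)) • X (m - (a + b)) else 0 := by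
        intro a b hb
        rw [Dder_X]
        by_cases h1 : b < m
        · have h2 : Odd (m - b) := Nat.Odd.sub_even h1.le hm hb
          rw [if_pos ⟨hm, h1⟩, Derivation.map_smul, Dder_X]
          by_cases h3 : a + b < m
          · rw [if_pos ⟨h2, by omega⟩, if_pos h3, smul_smul, Nat.cast_sub h1.le,
              show m - b - a = m - (a + b) by omega]
          · rw [if_neg (by omega), if_neg h3, smul_zero]
        · rw [if_neg (by omega), if_neg (by omega), map_zero]
      rw [key a b hb, key b a ha, Dder_X, add_comm b a]
      by_cases h3 : a + b < m
      · rw [if_pos h3, if_pos h3, if_pos ⟨hm, h3⟩, smul_smul, ← sub_smul]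
        congr 1
        push_cast; ring
      · simp [h3]
    · simp [Dder_X, hm]
  have := congrArg (fun D => D f) h
  simpa only [Derivation.commutator_apply, Derivation.smul_apply] using this

/-- The second-order part. -/
def Sop (a : ℕ) : MvPolynomial ℕ ℚ →ₗ[ℚ] MvPolynomial ℕ ℚ :=
  ∑ k ∈ Finset.range a, if Odd k then
    (pderiv (R := ℚ) k).toLinearMap ∘ₗ (pderiv (R := ℚ) (a - k)).toLinearMap else 0

lemma Sop_apply (a : ℕ) (f : MvPolynomial ℕ ℚ) : Sop a f =
    ∑ k ∈ Finset.range a, if Odd k then pderiv k (pderiv (a - k) f) else 0 := by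
  rw [Sop, LinearMap.sum_apply]
  apply Finset.sum_congr rfl
  intro k _
  split_ifs <;> simp

lemma pderiv_comm' (k l : ℕ) (f : MvPolynomial ℕ ℚ) :
    pderiv k (pderiv l f) = pderiv l (pderiv k f) := by
  have h : ⁅pderiv (R := ℚ) k, pderiv (R := ℚ) l⁆ = 0 := by
    apply derivation_ext
    intro m
    rw [Derivation.commutator_apply, pderiv_X, pderiv_X, Pi.single_apply, Pi.single_apply]
    split_ifs <;> simp
  have := congrArg (fun D => D f) h
  simpa [Derivation.commutator_apply, sub_eq_zero] using this

lemma pderiv_Sop (k b : ℕ) (f : MvPolynomial ℕ ℚ) : pderiv k (Sop b f) = Sop b (pderiv k f) := by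
  rw [Sop_apply, Sop_apply, map_sum]
  apply Finset.sum_congr rfl
  intro l _
  split_ifs
  · rw [pderiv_comm' k l, pderiv_comm' k]
  · simp

lemma Sop_comm (a b : ℕ) (f : MvPolynomial ℕ ℚ) : Sop a (Sop b f) = Sop b (Sop a f) := by
  rw [Sop_apply a, Sop_apply a, map_sum]
  apply Finset.sum_congr rfl
  intro l _
  split_ifs
  · rw [pderiv_Sop, pderiv_Sop]
  · simp

/-- Summand. -/
def Gs (c : ℕ) (f : MvPolynomial ℕ ℚ) (k : ℕ) : MvPolynomial ℕ ℚ :=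
  if Odd k then pderiv k (pderiv (c - k) f) else 0

lemma Sop_Dder (a b : ℕ) (ha : Even a) (hb : Even b) (f : MvPolynomial ℕ ℚ) :
    Sop a (Dder b f) - Dder b (Sop a f) =
      ∑ k ∈ Finset.range a, (k : ℚ) • Gs (a + b) f (b + k)
      + ∑ k ∈ Finset.range a, ((a : ℚ) - k) • Gs (a + b) f k := by
  rw [Sop_apply, Sop_apply, map_sum, ← Finset.sum_sub_distrib, ← Finset.sum_add_distrib]
  apply Finset.sum_congr rfl
  intro k hk
  have hk' := Finset.mem_range.1 hk
  have ho : Odd (b + k) ↔ Odd k := by rw [add_comm, Nat.odd_add]; simp [hb]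
  by_cases h : Odd k
  · have h2 : Odd (a - k) := Nat.Even.sub_odd hk'.le ha h
    simp only [Gs, ho, h, if_true]
    rw [pderiv_Dder _ _ h2 hb, map_add, pderiv_Dder _ _ h hb, Derivation.map_smul,
      Nat.cast_sub hk'.le, show a + b - (b + k) = a - k by omega,
      show a + b - k = a - k + b by omega, add_comm b k]
    abel
  · simp [Gs, ho, h]

lemma cross (a b : ℕ) (ha : Even a) (hb : Even b) (f : MvPolynomial ℕ ℚ) :
    (Sop a (Dder b f) - Dder b (Sop a f)) - (Sop b (Dder a f) - Dder a (Sop b f)) =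
      ((a : ℚ) - b) • Sop (a + b) f := by
  rw [Sop_Dder a b ha hb, Sop_Dder b a hb ha]
  have e1 : ∑ k ∈ Finset.range (b + a), ((k : ℚ) - b) • Gs (a + b) f k =
      - ∑ k ∈ Finset.range b, ((b : ℚ) - k) • Gs (a + b) f k
      + ∑ k ∈ Finset.range a, (k : ℚ) • Gs (a + b) f (b + k) := by
    rw [Finset.sum_range_add, ← Finset.sum_neg_distrib]
    congr 1 <;> refine Finset.sum_congr rfl fun k _ => ?_
    · rw [← neg_smul, neg_sub]
    · push_cast; rw [add_sub_cancel_left]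
  have e2 : ∑ k ∈ Finset.range (a + b), ((a : ℚ) - k) • Gs (a + b) f k =
      ∑ k ∈ Finset.range a, ((a : ℚ) - k) • Gs (a + b) f k
      - ∑ k ∈ Finset.range b, (k : ℚ) • Gs (a + b) f (a + k) := by
    rw [Finset.sum_range_add, sub_eq_add_neg, ← Finset.sum_neg_distrib]
    congr 1
    refine Finset.sum_congr rfl fun k _ => ?_
    push_cast; rw [← neg_smul]; congr 1; ring
  have e3 : ((a : ℚ) - b) • Sop (a + b) f =
      ∑ k ∈ Finset.range (b + a), ((k : ℚ) - b) • Gs (a + b) f k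
      + ∑ k ∈ Finset.range (a + b), ((a : ℚ) - k) • Gs (a + b) f k := by
    rw [add_comm b a, Sop_apply, Finset.smul_sum, ← Finset.sum_add_distrib]
    refine Finset.sum_congr rfl fun k _ => ?_
    rw [← add_smul]
    unfold Gs
    congr 1; ring
  rw [e3, e1, e2, add_comm b a]
  abel

lemma Vop_eq (n j : ℕ) (f : MvPolynomial ℕ ℚ) : Vop n j f =
    (1 / (4 * n) : ℚ) • Sop (2 * n * j) f + (1 / (2 * n) : ℚ) • Dder (2 * n * j) f := by
  rw [Vop, Sop_apply, finsum_eq_Dder _ ⟨n * j, by ring⟩]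

/-- For `n ≥ 1` the operators `V_j` satisfy
`[V_i, V_j] = (i - j) V_{i+j}` for all `i, j ≥ 1`. -/
theorem commutator_Vi_Vj (n : ℕ) (hn : 1 ≤ n) (i j : ℕ) (hi : 1 ≤ i) (hj : 1 ≤ j) :
    (fun f => Vop n i (Vop n j f) - Vop n j (Vop n i f))
      = fun f : MvPolynomial ℕ ℚ => ((i : ℚ) - (j : ℚ)) • Vop n (i + j) f := by
  funext f
  have hn0 : (n : ℚ) ≠ 0 := by positivity
  have ha : Even (2 * n * i) := ⟨n * i, by ring⟩
  have hb : Even (2 * n * j) := ⟨n * j, by ring⟩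
  have c1 := cross _ _ ha hb f
  have c2 := Dder_comm _ _ ha hb f
  have c3 := Sop_comm (2 * n * i) (2 * n * j) f
  simp only [Vop_eq, map_add, map_smul, Derivation.map_smul, mul_add]
  have hc : (((2 * n * i : ℕ) : ℚ) - ((2 * n * j : ℕ) : ℚ)) = (2 * n) * ((i : ℚ) - j) := by
    push_cast; ring
  rw [hc] at c1 c2
  have e1 : ((i : ℚ) - j) • (1 / (4 * n) : ℚ) • Sop (2 * n * i + 2 * n * j) f =
      (1 / (4 * n) * (1 / (2 * n)) : ℚ) • ((2 * n) * ((i : ℚ) - j)) •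
        Sop (2 * n * i + 2 * n * j) f := by
    rw [smul_smul, smul_smul]; congr 1; field_simp
  have e2 : ((i : ℚ) - j) • (1 / (2 * n) : ℚ) • Dder (2 * n * i + 2 * n * j) f =
      (1 / (2 * n) * (1 / (2 * n)) : ℚ) • ((2 * n) * ((i : ℚ) - j)) •
        Dder (2 * n * i + 2 * n * j) f := by
    rw [smul_smul, smul_smul]; congr 1; field_simp
  rw [smul_add ((i : ℚ) - j), e1, e2, ← c1, ← c2, c3]
  module
end
end

section
/- Let L be a pseudo-differential operator of the form D + Σ_{i≥1} v_i D^{-i} with L* = -L, and suppose (L^{2n})_- = 0 for some n ≥ 1. Define A_{1,l} = M L^l + L^l M for any operator M with [L,M]=1 and M*=M. Then for j ≥ -1, the negative part of [A_{1,2nj+1}, L^{2n}] vanishes; equivalently, [-(A_{1,2nj+1})_-, L^{2n}]_- = 4n (L^{2n(j+1)})_- = 0. -/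
/-!
Pseudo-differential operators over a commutative differential ring `(A, d)` are
modelled by their coefficient functions `a : ℤ → A` (the coefficient of `D^i`),
with support bounded above.  The product is
`f D^i · g D^j = ∑_{r ≥ 0} C(i,r) f D^r(g) D^{i+j-r}` and the adjoint is
`(f D^i)* = (-D)^i f`.
-/

noncomputable section

open scoped BigOperators

/-- The generalized binomial coefficient `C(i, r)` for an integer `i`
(the division is exact). -/
def genChoose (i : ℤ) (r : ℕ) : ℤ :=
  (∏ s ∈ Finset.range r, (i - (s : ℤ))) / (r.factorial : ℤ)

variable {A : Type*} [CommRing A]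

/-- Coefficient function of the product of two pseudo-differential operators:
`(f D^i) · (g D^j) = ∑_{r ≥ 0} C(i,r) f D^r(g) D^{i+j-r}`. -/
def pdoMul (d : A → A) (a b : ℤ → A) : ℤ → A :=
  fun k => ∑ᶠ (i : ℤ), ∑ᶠ (r : ℕ),
    ((genChoose i r : ℤ) : A) * a i * d^[r] (b (k - i + r))

/-- Coefficient function of the adjoint `A* = ∑_i (-D)^i f_i`. -/
def pdoAdj (d : A → A) (a : ℤ → A) : ℤ → A :=
  fun k => ∑ᶠ (i : ℤ),
    if k ≤ i then
      ((-1 : A) ^ i.natAbs) * ((genChoose i (i - k).toNat : ℤ) : A)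
        * d^[(i - k).toNat] (a i)
    else 0

/-- A pseudo-differential operator has coefficients supported in degrees `≤ N`. -/
def pdoBdd (a : ℤ → A) : Prop := ∃ N : ℤ, ∀ i : ℤ, N < i → a i = 0

/-- The identity pseudo-differential operator. -/
def pdoOne : ℤ → A := fun k => if k = 0 then 1 else 0

/-- Powers of a pseudo-differential operator. -/
def pdoPow (d : A → A) (a : ℤ → A) : ℕ → (ℤ → A)
  | 0 => pdoOne
  | n + 1 => pdoMul d a (pdoPow d a n)

/-- Integer powers, given an inverse `ai` of `a`. -/
def pdoZpow (d : A → A) (a ai : ℤ → A) (m : ℤ) : ℤ → A :=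
  if 0 ≤ m then pdoPow d a m.toNat else pdoPow d ai (-m).toNat

/-- The negative part `A_- = ∑_{i<0} f_i D^i`. -/
def pdoNegPart (a : ℤ → A) : ℤ → A := fun k => if k < 0 then a k else 0

/-! ### Binomial coefficients and the iterated Leibniz rule -/

theorem genChoose_eq (i : ℤ) (r : ℕ) : genChoose i r = Ring.choose i r := by
  have h := Ring.descPochhammer_eq_factorial_smul_choose i r
  rw [← Polynomial.eval_eq_smeval, descPochhammer_eval_eq_prod_range] at h
  unfold genChoose
  rw [h, nsmul_eq_mul]
  exact Int.mul_ediv_cancel_left _ (by exact_mod_cast r.factorial_ne_zero)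

theorem genChoose_zero (i : ℤ) : genChoose i 0 = 1 := by
  rw [genChoose_eq, Ring.choose_zero_right]

theorem genChoose_of_lt (i : ℤ) (r : ℕ) (h0 : 0 ≤ i) (h : i < r) : genChoose i r = 0 := by
  obtain ⟨m, rfl⟩ := Int.eq_ofNat_of_zero_le h0
  rw [genChoose_eq, Ring.choose_natCast, Nat.choose_eq_zero_of_lt (by omega)]
  rfl

theorem der_iterate_sum (d : Derivation ℤ A A) {ι : Type*} (s : Finset ι) (f : ι → A) (r : ℕ) :
    (⇑d)^[r] (∑ i ∈ s, f i) = ∑ i ∈ s, (⇑d)^[r] (f i) := by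
  induction r generalizing f with
  | zero => simp
  | succ r ih => simp only [Function.iterate_succ_apply, map_sum, ih]

theorem der_iterate_zero (d : Derivation ℤ A A) (r : ℕ) : (⇑d)^[r] (0 : A) = 0 :=
  iterate_map_zero d r

theorem der_iterate_intCast_mul (d : Derivation ℤ A A) (c : ℤ) (x : A) (r : ℕ) :
    (⇑d)^[r] ((c : A) * x) = (c : A) * (⇑d)^[r] x := by
  induction r generalizing x with
  | zero => simp
  | succ r ih =>
    rw [Function.iterate_succ_apply, Function.iterate_succ_apply, ← ih]
    congr 1
    rw [← zsmul_eq_mul, map_zsmul, zsmul_eq_mul]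

theorem der_iterate_mul (d : Derivation ℤ A A) (x y : A) (t : ℕ) :
    (⇑d)^[t] (x * y) = ∑ p ∈ Finset.HasAntidiagonal.antidiagonal t,
      ((t.choose p.1 : ℕ) : A) * ((⇑d)^[p.1] x * (⇑d)^[p.2] y) := by
  induction t with
  | zero => simp
  | succ t ih =>
    rw [Finset.sum_antidiagonal_choose_succ_mul (fun a b => (⇑d)^[a] x * (⇑d)^[b] y),
      Function.iterate_succ_apply', ih, map_sum, ← Finset.sum_add_distrib]
    refine Finset.sum_congr rfl fun p hp => ?_
    have hp' := Finset.HasAntidiagonal.mem_antidiagonal.1 hp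
    have hc : t.choose p.2 = t.choose p.1 := by
      rw [← hp']; exact Nat.choose_symm_add.symm
    rw [← nsmul_eq_mul, map_nsmul, Derivation.leibniz, hc,
      Function.iterate_succ_apply', Function.iterate_succ_apply']
    simp only [nsmul_eq_mul, smul_eq_mul]
    ring

/-- The coefficient identity behind associativity. -/
theorem assoc_core (d : Derivation ℤ A A) (i j : ℤ) (x y z : A) (T : ℕ) :
    ∑ p ∈ Finset.HasAntidiagonal.antidiagonal T, ((genChoose (i + j - p.1) p.2 : ℤ) : A) *
        (((genChoose i p.1 : ℤ) : A) * x * (⇑d)^[p.1] y) * (⇑d)^[p.2] z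
      = ∑ p ∈ Finset.HasAntidiagonal.antidiagonal T, ((genChoose i p.1 : ℤ) : A) * x *
        (⇑d)^[p.1] (((genChoose j p.2 : ℤ) : A) * y * (⇑d)^[p.2] z) := by
  simp only [genChoose_eq, mul_assoc, der_iterate_intCast_mul]
  simp only [der_iterate_mul]
  have h1 : ∀ p : ℕ × ℕ, Ring.choose (i + j - p.1) p.2
      = ∑ q ∈ Finset.HasAntidiagonal.antidiagonal p.2, Ring.choose (i - p.1) q.1 * Ring.choose j q.2 := by
    intro p
    rw [← Ring.add_choose_eq p.2 (Commute.all _ _)]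
    congr 1
    ring
  simp only [h1, Int.cast_sum, Finset.sum_mul, Finset.mul_sum]
  rw [Finset.sum_sigma', Finset.sum_sigma']
  refine Finset.sum_bij' (fun a _ => ⟨(a.1.1 + a.2.1, a.2.2), (a.1.1, a.2.1)⟩)
    (fun a _ => ⟨(a.2.1, a.2.2 + a.1.2), (a.2.2, a.1.2)⟩) ?_ ?_ ?_ ?_ ?_
  · rintro ⟨⟨a, b⟩, ⟨c, e⟩⟩ h
    simp only [Finset.mem_sigma, Finset.HasAntidiagonal.mem_antidiagonal] at h ⊢
    exact ⟨by omega, trivial⟩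
  · rintro ⟨⟨a, b⟩, ⟨c, e⟩⟩ h
    simp only [Finset.mem_sigma, Finset.HasAntidiagonal.mem_antidiagonal] at h ⊢
    exact ⟨by omega, trivial⟩
  · rintro ⟨⟨a, b⟩, ⟨c, e⟩⟩ h
    simp only [Finset.mem_sigma, Finset.HasAntidiagonal.mem_antidiagonal] at h
    obtain ⟨h1, h2⟩ := h
    subst h2
    rfl
  · rintro ⟨⟨a, b⟩, ⟨c, e⟩⟩ h
    simp only [Finset.mem_sigma, Finset.HasAntidiagonal.mem_antidiagonal] at h
    obtain ⟨h1, h2⟩ := h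
    subst h2
    rfl
  · rintro ⟨⟨a, b⟩, ⟨c, e⟩⟩ h
    simp only [Finset.mem_sigma, Finset.HasAntidiagonal.mem_antidiagonal] at h
    obtain ⟨h1, h2⟩ := h
    subst h2
    have h3 := Ring.choose_smul_choose i (Nat.le_add_right a c)
    rw [nsmul_eq_mul, Nat.add_sub_cancel_left] at h3
    have h4 : ((((a + c).choose a : ℕ) : A)) * ((Ring.choose i (a + c) : ℤ) : A)
        = ((Ring.choose i a : ℤ) : A) * ((Ring.choose (i - a) c : ℤ) : A) := by
      exact_mod_cast congrArg (Int.cast : ℤ → A) h3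
    simp only [Int.cast_mul, Function.iterate_add_apply]
    linear_combination (-((Ring.choose j e : ℤ) : A) * x * (⇑d)^[a] y * (⇑d)^[c] ((⇑d)^[e] z)) * h4

/-! ### The product as a finite double sum -/

/-- The contribution of `(x D^i) (y D^j)` to the coefficient of `D^k`. -/
def pdoTerm (d : Derivation ℤ A A) (k i j : ℤ) (x y : A) : A :=
  if k ≤ i + j then
    ((genChoose i (i + j - k).toNat : ℤ) : A) * x * (⇑d)^[(i + j - k).toNat] y
  else 0

theorem pdoTerm_of_le (d : Derivation ℤ A A) (k i j : ℤ) (x y : A) (r : ℕ) (h : i + j - k = r) :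
    pdoTerm d k i j x y = ((genChoose i r : ℤ) : A) * x * (⇑d)^[r] y := by
  have : (i + j - k).toNat = r := by omega
  unfold pdoTerm
  rw [if_pos (by omega), this]

theorem pdoTerm_of_lt (d : Derivation ℤ A A) (k i j : ℤ) (x y : A) (h : i + j < k) :
    pdoTerm d k i j x y = 0 := if_neg (by omega)

theorem pdoTerm_zero_left (d : Derivation ℤ A A) (k i j : ℤ) (y : A) :
    pdoTerm d k i j 0 y = 0 := by
  simp [pdoTerm]

theorem pdoTerm_zero_right (d : Derivation ℤ A A) (k i j : ℤ) (x : A) :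
    pdoTerm d k i j x 0 = 0 := by
  simp [pdoTerm]

theorem pdoTerm_add_left (d : Derivation ℤ A A) (k i j : ℤ) (x x' y : A) :
    pdoTerm d k i j (x + x') y = pdoTerm d k i j x y + pdoTerm d k i j x' y := by
  unfold pdoTerm
  split_ifs
  · ring
  · simp

theorem pdoTerm_add_right (d : Derivation ℤ A A) (k i j : ℤ) (x y y' : A) :
    pdoTerm d k i j x (y + y') = pdoTerm d k i j x y + pdoTerm d k i j x y' := by
  unfold pdoTerm
  split_ifs
  · rw [iterate_map_add]; ring
  · simp

theorem pdoTerm_sum_left (d : Derivation ℤ A A) (k i j : ℤ) {ι : Type*} (s : Finset ι)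
    (f : ι → A) (y : A) :
    pdoTerm d k i j (∑ t ∈ s, f t) y = ∑ t ∈ s, pdoTerm d k i j (f t) y := by
  unfold pdoTerm
  split_ifs
  · rw [Finset.mul_sum, Finset.sum_mul]
  · simp

theorem pdoTerm_sum_right (d : Derivation ℤ A A) (k i j : ℤ) {ι : Type*} (s : Finset ι)
    (f : ι → A) (x : A) :
    pdoTerm d k i j x (∑ t ∈ s, f t) = ∑ t ∈ s, pdoTerm d k i j x (f t) := by
  unfold pdoTerm
  split_ifs
  · rw [der_iterate_sum, Finset.mul_sum]
  · simp

theorem pdoMul_expand (d : Derivation ℤ A A) (a b : ℤ → A) (Na Nb k : ℤ)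
    (ha : ∀ i, Na < i → a i = 0) (hb : ∀ i, Nb < i → b i = 0) (S T : Finset ℤ)
    (hS : Finset.Icc (k - Nb) Na ⊆ S) (hT : Finset.Icc (k - Na) Nb ⊆ T) :
    pdoMul d a b k = ∑ i ∈ S, ∑ j ∈ T, pdoTerm d k i j (a i) (b j) := by
  have inner : ∀ i : ℤ, (∑ᶠ (r : ℕ), ((genChoose i r : ℤ) : A) * a i * (⇑d)^[r] (b (k - i + r)))
      = ∑ j ∈ T, pdoTerm d k i j (a i) (b j) := by
    intro i
    by_cases hi : Na < i
    · simp [ha i hi, pdoTerm_zero_left]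
    rw [finsum_eq_sum_of_support_subset (s := (T.filter (fun j => k - i ≤ j)).image
      (fun j => (j - (k - i)).toNat))]
    · rw [Finset.sum_image]
      · rw [Finset.sum_filter]
        refine Finset.sum_congr rfl fun j _ => ?_
        split_ifs with h
        · rw [pdoTerm_of_le d k i j _ _ (j - (k - i)).toNat (by omega)]
          congr 3
          omega
        · rw [pdoTerm_of_lt d k i j _ _ (by omega)]
      · intro x hx y hy hxy
        simp only [Finset.coe_filter, Set.mem_ofPred_eq] at hx hy
        simp only at hxy
        omega
    · intro r hr
      have hb' : b (k - i + r) ≠ 0 := by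
        intro h0
        apply hr
        simp only [h0, der_iterate_zero, mul_zero]
      have h1 : k - i + r ≤ Nb := by
        by_contra h
        exact hb' (hb _ (by omega))
      simp only [Finset.coe_image, Finset.coe_filter, Set.mem_image, Set.mem_ofPred_eq]
      refine ⟨k - i + r, ⟨hT (Finset.mem_Icc.2 ⟨by omega, h1⟩), by omega⟩, by omega⟩
  unfold pdoMul
  simp only [inner]
  apply finsum_eq_sum_of_support_subset
  intro i hi
  apply hS
  rw [Finset.mem_Icc]
  constructor
  · by_contra h
    apply hi
    refine Finset.sum_eq_zero fun j _ => ?_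
    by_cases hj : Nb < j
    · rw [hb j hj, pdoTerm_zero_right]
    · exact pdoTerm_of_lt _ _ _ _ _ _ (by omega)
  · by_contra h
    apply hi
    refine Finset.sum_eq_zero fun j _ => ?_
    rw [ha i (by omega), pdoTerm_zero_left]

theorem pdoMul_high (d : Derivation ℤ A A) (a b : ℤ → A) (Na Nb : ℤ)
    (ha : ∀ i, Na < i → a i = 0) (hb : ∀ i, Nb < i → b i = 0) (k : ℤ) (hk : Na + Nb < k) :
    pdoMul d a b k = 0 := by
  rw [pdoMul_expand d a b Na Nb k ha hb _ _ subset_rfl subset_rfl,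
    Finset.Icc_eq_empty (by omega), Finset.sum_empty]

theorem pdoTerm_assoc (d : Derivation ℤ A A) (k i j l N : ℤ) (x y z : A)
    (hi : i ≤ N) (hj : j ≤ N) (hl : l ≤ N) :
    ∑ m ∈ Finset.Icc (k - N) (2 * N), pdoTerm d k m l (pdoTerm d m i j x y) z
      = ∑ m ∈ Finset.Icc (k - N) (2 * N), pdoTerm d k i m x (pdoTerm d m j l y z) := by
  by_cases hlt : i + j + l < k
  · trans (0 : A)
    · refine Finset.sum_eq_zero fun m _ => ?_
      by_cases h : i + j < m
      · rw [pdoTerm_of_lt d m i j x y h, pdoTerm_zero_left]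
      · exact pdoTerm_of_lt _ _ _ _ _ _ (by omega)
    · symm
      refine Finset.sum_eq_zero fun m _ => ?_
      by_cases h : j + l < m
      · rw [pdoTerm_of_lt d m j l y z h, pdoTerm_zero_right]
      · exact pdoTerm_of_lt _ _ _ _ _ _ (by omega)
  obtain ⟨T, hT⟩ : ∃ T : ℕ, i + j + l - k = T := ⟨(i + j + l - k).toNat, by omega⟩
  have hl' : ∑ m ∈ Finset.Icc (k - N) (2 * N), pdoTerm d k m l (pdoTerm d m i j x y) z
      = ∑ p ∈ Finset.HasAntidiagonal.antidiagonal T,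
        ((genChoose (i + j - p.1) p.2 : ℤ) : A) *
        (((genChoose i p.1 : ℤ) : A) * x * (⇑d)^[p.1] y) * (⇑d)^[p.2] z := by
    symm
    refine Finset.sum_of_injOn (fun p : ℕ × ℕ => i + j - (p.1 : ℤ)) ?_ ?_ ?_ ?_
    · rintro ⟨p, q⟩ hp ⟨p', q'⟩ hp' h
      simp only [Finset.mem_coe, Finset.HasAntidiagonal.mem_antidiagonal] at hp hp' h
      ext <;> simp only <;> omega
    · rintro ⟨p, q⟩ hp
      simp only [Finset.mem_coe, Finset.HasAntidiagonal.mem_antidiagonal] at hp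
      simp only [Finset.coe_Icc, Set.mem_Icc]
      omega
    · intro m _ hm
      by_cases h : i + j < m
      · rw [pdoTerm_of_lt d m i j x y h, pdoTerm_zero_left]
      · by_cases h2 : m + l < k
        · exact pdoTerm_of_lt _ _ _ _ _ _ h2
        · exfalso
          apply hm
          refine ⟨((i + j - m).toNat, (m + l - k).toNat), ?_, ?_⟩
          · simp only [Finset.mem_coe, Finset.HasAntidiagonal.mem_antidiagonal]
            omega
          · simp only
            omega
    · rintro ⟨p, q⟩ hp
      simp only [Finset.HasAntidiagonal.mem_antidiagonal] at hp
      simp only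
      rw [pdoTerm_of_le d _ i j x y p (by omega), pdoTerm_of_le d _ _ l _ z q (by omega)]
  have hr' : ∑ m ∈ Finset.Icc (k - N) (2 * N), pdoTerm d k i m x (pdoTerm d m j l y z)
      = ∑ p ∈ Finset.HasAntidiagonal.antidiagonal T, ((genChoose i p.1 : ℤ) : A) * x *
        (⇑d)^[p.1] (((genChoose j p.2 : ℤ) : A) * y * (⇑d)^[p.2] z) := by
    symm
    refine Finset.sum_of_injOn (fun p : ℕ × ℕ => j + l - (p.2 : ℤ)) ?_ ?_ ?_ ?_
    · rintro ⟨p, q⟩ hp ⟨p', q'⟩ hp' h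
      simp only [Finset.mem_coe, Finset.HasAntidiagonal.mem_antidiagonal] at hp hp' h
      ext <;> simp only <;> omega
    · rintro ⟨p, q⟩ hp
      simp only [Finset.mem_coe, Finset.HasAntidiagonal.mem_antidiagonal] at hp
      simp only [Finset.coe_Icc, Set.mem_Icc]
      omega
    · intro m _ hm
      by_cases h : j + l < m
      · rw [pdoTerm_of_lt d m j l y z h, pdoTerm_zero_right]
      · by_cases h2 : i + m < k
        · exact pdoTerm_of_lt _ _ _ _ _ _ h2
        · exfalso
          apply hm
          refine ⟨((i + m - k).toNat, (j + l - m).toNat), ?_, ?_⟩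
          · simp only [Finset.mem_coe, Finset.HasAntidiagonal.mem_antidiagonal]
            omega
          · simp only
            omega
    · rintro ⟨p, q⟩ hp
      simp only [Finset.HasAntidiagonal.mem_antidiagonal] at hp
      simp only
      rw [pdoTerm_of_le d _ j l y z q (by omega), pdoTerm_of_le d _ i _ x _ p (by omega)]
  rw [hl', hr', assoc_core]

theorem exists_common_bound (a b c : ℤ → A) (ha : pdoBdd a) (hb : pdoBdd b) (hc : pdoBdd c) :
    ∃ N : ℤ, (∀ i, N < i → a i = 0) ∧ (∀ i, N < i → b i = 0) ∧ (∀ i, N < i → c i = 0) := by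
  obtain ⟨p, hp⟩ := ha
  obtain ⟨q, hq⟩ := hb
  obtain ⟨r, hr⟩ := hc
  exact ⟨max p (max q r), fun i h => hp i (by omega), fun i h => hq i (by omega),
    fun i h => hr i (by omega)⟩

theorem pdoMul_assoc (d : Derivation ℤ A A) (a b c : ℤ → A)
    (ha : pdoBdd a) (hb : pdoBdd b) (hc : pdoBdd c) :
    pdoMul d (pdoMul d a b) c = pdoMul d a (pdoMul d b c) := by
  obtain ⟨N, ha, hb, hc⟩ := exists_common_bound a b c ha hb hc
  funext k
  have hab : ∀ m, 2 * N < m → pdoMul d a b m = 0 := fun m hm =>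
    pdoMul_high d a b N N ha hb m (by omega)
  have hbc : ∀ m, 2 * N < m → pdoMul d b c m = 0 := fun m hm =>
    pdoMul_high d b c N N hb hc m (by omega)
  rw [pdoMul_expand d _ c (2 * N) N k hab hc (Finset.Icc (k - N) (2 * N))
      (Finset.Icc (k - 2 * N) N) subset_rfl subset_rfl,
    pdoMul_expand d a _ N (2 * N) k ha hbc (Finset.Icc (k - 2 * N) N)
      (Finset.Icc (k - N) (2 * N)) subset_rfl subset_rfl]
  have hJ : ∀ (f g : ℤ → A), (∀ i, N < i → f i = 0) → (∀ i, N < i → g i = 0) →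
      ∀ m ∈ Finset.Icc (k - N) (2 * N), pdoMul d f g m = ∑ i ∈ Finset.Icc (k - 2 * N) N,
        ∑ j ∈ Finset.Icc (k - 2 * N) N, pdoTerm d m i j (f i) (g j) := by
    intro f g hf hg m hm
    rw [Finset.mem_Icc] at hm
    apply pdoMul_expand d f g N N m hf hg
    · exact Finset.Icc_subset_Icc (by omega) le_rfl
    · exact Finset.Icc_subset_Icc (by omega) le_rfl
  generalize hI : Finset.Icc (k - 2 * N) N = I at *
  have hIle : ∀ i ∈ I, i ≤ N := fun i hi => by
    rw [← hI] at hi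
    exact (Finset.mem_Icc.1 hi).2
  trans ∑ i ∈ I, ∑ j ∈ I, ∑ l ∈ I, ∑ m ∈ Finset.Icc (k - N) (2 * N),
      pdoTerm d k m l (pdoTerm d m i j (a i) (b j)) (c l)
  · have e1 : ∀ m ∈ Finset.Icc (k - N) (2 * N),
        ∑ l ∈ I, pdoTerm d k m l (pdoMul d a b m) (c l)
        = ∑ i ∈ I, ∑ j ∈ I, ∑ l ∈ I, pdoTerm d k m l (pdoTerm d m i j (a i) (b j)) (c l) := by
      intro m hm
      rw [hJ a b ha hb m hm]
      simp only [pdoTerm_sum_left]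
      rw [Finset.sum_comm]
      exact Finset.sum_congr rfl fun i _ => Finset.sum_comm
    rw [Finset.sum_congr rfl e1, Finset.sum_comm]
    refine Finset.sum_congr rfl fun i _ => ?_
    rw [Finset.sum_comm]
    exact Finset.sum_congr rfl fun j _ => Finset.sum_comm
  · refine Finset.sum_congr rfl fun i hi => ?_
    have e2 : ∀ m ∈ Finset.Icc (k - N) (2 * N), pdoTerm d k i m (a i) (pdoMul d b c m)
        = ∑ j ∈ I, ∑ l ∈ I, pdoTerm d k i m (a i) (pdoTerm d m j l (b j) (c l)) := by
      intro m hm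
      rw [hJ b c hb hc m hm]
      simp only [pdoTerm_sum_right]
    rw [Finset.sum_congr rfl e2]
    refine Eq.trans ?_ Finset.sum_comm
    refine Finset.sum_congr rfl fun j hj => ?_
    refine Eq.trans ?_ Finset.sum_comm
    exact Finset.sum_congr rfl fun l hl =>
      pdoTerm_assoc d k i j l N _ _ _ (hIle i hi) (hIle j hj) (hIle l hl)

theorem pdoMul_add_left (d : Derivation ℤ A A) (a b c : ℤ → A)
    (ha : pdoBdd a) (hb : pdoBdd b) (hc : pdoBdd c) :
    pdoMul d (a + b) c = pdoMul d a c + pdoMul d b c := by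
  obtain ⟨N, ha, hb, hc⟩ := exists_common_bound a b c ha hb hc
  funext k
  have hab : ∀ i, N < i → (a + b) i = 0 := fun i hi => by simp [ha i hi, hb i hi]
  rw [Pi.add_apply, pdoMul_expand d _ c N N k hab hc _ _ subset_rfl subset_rfl,
    pdoMul_expand d a c N N k ha hc _ _ subset_rfl subset_rfl,
    pdoMul_expand d b c N N k hb hc _ _ subset_rfl subset_rfl]
  simp only [Pi.add_apply, pdoTerm_add_left, Finset.sum_add_distrib]

theorem pdoMul_add_right (d : Derivation ℤ A A) (a b c : ℤ → A)
    (ha : pdoBdd a) (hb : pdoBdd b) (hc : pdoBdd c) :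
    pdoMul d a (b + c) = pdoMul d a b + pdoMul d a c := by
  obtain ⟨N, ha, hb, hc⟩ := exists_common_bound a b c ha hb hc
  funext k
  have hbc : ∀ i, N < i → (b + c) i = 0 := fun i hi => by simp [hb i hi, hc i hi]
  rw [Pi.add_apply, pdoMul_expand d a _ N N k ha hbc _ _ subset_rfl subset_rfl,
    pdoMul_expand d a b N N k ha hb _ _ subset_rfl subset_rfl,
    pdoMul_expand d a c N N k ha hc _ _ subset_rfl subset_rfl]
  simp only [Pi.add_apply, pdoTerm_add_right, Finset.sum_add_distrib]

theorem der_iterate_one (d : Derivation ℤ A A) (r : ℕ) (hr : r ≠ 0) : (⇑d)^[r] (1 : A) = 0 := by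
  obtain ⟨s, rfl⟩ := Nat.exists_eq_succ_of_ne_zero hr
  rw [Function.iterate_succ_apply, Derivation.map_one_eq_zero, der_iterate_zero]

theorem pdoOne_high : ∀ i : ℤ, 0 < i → (pdoOne : ℤ → A) i = 0 := fun i hi => by
  unfold pdoOne
  rw [if_neg (by omega)]

theorem pdoMul_one' (d : Derivation ℤ A A) (a : ℤ → A) (ha : pdoBdd a) :
    pdoMul d a pdoOne = a := by
  obtain ⟨N, ha⟩ := ha
  funext k
  rw [pdoMul_expand d a pdoOne N 0 k ha pdoOne_high (insert k (Finset.Icc (k - 0) N))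
    (insert 0 (Finset.Icc (k - N) 0)) (Finset.subset_insert _ _) (Finset.subset_insert _ _)]
  rw [Finset.sum_eq_single k, Finset.sum_eq_single 0]
  · rw [pdoTerm_of_le d k k 0 _ _ 0 (by simp)]
    simp [genChoose_zero, pdoOne]
  · intro j _ hj
    rw [pdoOne, if_neg hj, pdoTerm_zero_right]
  · simp
  · intro i _ hi
    refine Finset.sum_eq_zero fun j _ => ?_
    by_cases hj : j = 0
    · subst hj
      by_cases h : i < k
      · exact pdoTerm_of_lt _ _ _ _ _ _ (by omega)
      · rw [pdoTerm_of_le d k i 0 _ _ (i - k).toNat (by omega), pdoOne, if_pos rfl,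
          der_iterate_one d _ (by omega), mul_zero]
    · rw [pdoOne, if_neg hj, pdoTerm_zero_right]
  · simp

theorem pdoOne_mul' (d : Derivation ℤ A A) (a : ℤ → A) (ha : pdoBdd a) :
    pdoMul d pdoOne a = a := by
  obtain ⟨N, ha⟩ := ha
  funext k
  rw [pdoMul_expand d pdoOne a 0 N k pdoOne_high ha (insert 0 (Finset.Icc (k - N) 0))
    (insert k (Finset.Icc (k - 0) N)) (Finset.subset_insert _ _) (Finset.subset_insert _ _)]
  rw [Finset.sum_eq_single 0, Finset.sum_eq_single k]
  · rw [pdoTerm_of_le d k 0 k _ _ 0 (by simp)]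
    simp [genChoose_zero, pdoOne]
  · intro j _ hj
    by_cases h : j < k
    · exact pdoTerm_of_lt _ _ _ _ _ _ (by omega)
    · rw [pdoTerm_of_le d k 0 j _ _ (j - k).toNat (by omega),
        genChoose_of_lt 0 _ le_rfl (by omega)]
      simp
  · simp
  · intro i _ hi
    refine Finset.sum_eq_zero fun j _ => ?_
    rw [pdoOne, if_neg hi, pdoTerm_zero_left]
  · simp

theorem pdoNegPart_mul (d : Derivation ℤ A A) (a b : ℤ → A) (ha : pdoBdd a) (hb : pdoBdd b)
    (ha' : pdoNegPart a = 0) (hb' : pdoNegPart b = 0) : pdoNegPart (pdoMul d a b) = 0 := by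
  have key : ∀ f : ℤ → A, pdoNegPart f = 0 → ∀ i < 0, f i = 0 := fun f hf i hi => by
    have := congrFun hf i
    simpa [pdoNegPart, hi] using this
  obtain ⟨N, ha, hb, -⟩ := exists_common_bound a b b ha hb hb
  funext k
  simp only [pdoNegPart, Pi.zero_apply]
  split_ifs with hk
  · rw [pdoMul_expand d a b N N k ha hb _ _ subset_rfl subset_rfl]
    refine Finset.sum_eq_zero fun i _ => Finset.sum_eq_zero fun j _ => ?_
    by_cases hi : i < 0
    · rw [key a ha' i hi, pdoTerm_zero_left]
    by_cases hj : j < 0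
    · rw [key b hb' j hj, pdoTerm_zero_right]
    rw [pdoTerm_of_le d k i j _ _ (i + j - k).toNat (by omega),
      genChoose_of_lt i _ (by omega) (by omega)]
    simp
  · rfl

/-! ### The ring of pseudo-differential operators -/

/-- Bounded coefficient functions form an additive subgroup. -/
def pdoSubgroup (A : Type*) [CommRing A] : AddSubgroup (ℤ → A) where
  carrier := {a | pdoBdd a}
  zero_mem' := ⟨0, fun _ _ => rfl⟩
  add_mem' := by
    rintro a b ⟨p, hp⟩ ⟨q, hq⟩
    exact ⟨max p q, fun i hi => by simp [hp i (by omega), hq i (by omega)]⟩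
  neg_mem' := by
    rintro a ⟨p, hp⟩
    exact ⟨p, fun i hi => by simp [hp i hi]⟩

/-- The type of pseudo-differential operators over `(A, d)`. -/
def PDO (_d : Derivation ℤ A A) : Type _ := pdoSubgroup A

theorem pdoMul_bdd (d : Derivation ℤ A A) (a b : ℤ → A) (ha : pdoBdd a) (hb : pdoBdd b) :
    pdoBdd (pdoMul d a b) := by
  obtain ⟨p, hp⟩ := ha
  obtain ⟨q, hq⟩ := hb
  exact ⟨p + q, pdoMul_high d a b p q hp hq⟩

instance (d : Derivation ℤ A A) : AddCommGroup (PDO d) :=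
  inferInstanceAs (AddCommGroup (pdoSubgroup A))

instance (d : Derivation ℤ A A) : Mul (PDO d) :=
  ⟨fun a b => ⟨pdoMul d a.1 b.1, pdoMul_bdd d _ _ a.2 b.2⟩⟩

instance (d : Derivation ℤ A A) : One (PDO d) := ⟨⟨pdoOne, 0, pdoOne_high⟩⟩

theorem PDO.val_mul (d : Derivation ℤ A A) (a b : PDO d) : (a * b).1 = pdoMul d a.1 b.1 := rfl
theorem PDO.val_one (d : Derivation ℤ A A) : (1 : PDO d).1 = pdoOne := rfl
theorem PDO.val_add (d : Derivation ℤ A A) (a b : PDO d) : (a + b).1 = a.1 + b.1 := rfl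
theorem PDO.val_sub (d : Derivation ℤ A A) (a b : PDO d) : (a - b).1 = a.1 - b.1 := rfl
theorem PDO.val_neg (d : Derivation ℤ A A) (a : PDO d) : (-a).1 = -a.1 := rfl
theorem PDO.val_zero (d : Derivation ℤ A A) : (0 : PDO d).1 = 0 := rfl

theorem PDO.ext' {d : Derivation ℤ A A} {a b : PDO d} (h : a.1 = b.1) : a = b := Subtype.ext h

theorem PDO.mul_add' (d : Derivation ℤ A A) (a b c : PDO d) : a * (b + c) = a * b + a * c :=
  PDO.ext' (pdoMul_add_right d _ _ _ a.2 b.2 c.2)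

theorem PDO.add_mul' (d : Derivation ℤ A A) (a b c : PDO d) : (a + b) * c = a * c + b * c :=
  PDO.ext' (pdoMul_add_left d _ _ _ a.2 b.2 c.2)

instance (d : Derivation ℤ A A) : Ring (PDO d) :=
  { (inferInstance : AddCommGroup (PDO d)) with
    mul := (· * ·)
    one := 1
    mul_assoc := fun a b c => PDO.ext' (pdoMul_assoc d _ _ _ a.2 b.2 c.2)
    one_mul := fun a => PDO.ext' (pdoOne_mul' d _ a.2)
    mul_one := fun a => PDO.ext' (pdoMul_one' d _ a.2)
    left_distrib := PDO.mul_add' d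
    right_distrib := PDO.add_mul' d
    zero_mul := fun a => by
      have h := PDO.add_mul' d 0 0 a
      rw [add_zero] at h
      exact left_eq_add.1 h
    mul_zero := fun a => by
      have h := PDO.mul_add' d a 0 0
      rw [add_zero] at h
      exact left_eq_add.1 h }

theorem PDO.val_pow (d : Derivation ℤ A A) (a : PDO d) (n : ℕ) :
    (a ^ n).1 = pdoPow d a.1 n := by
  induction n with
  | zero => rfl
  | succ n ih => rw [pow_succ', PDO.val_mul, ih]; rfl

theorem PDO.val_zpow (d : Derivation ℤ A A) (u : (PDO d)ˣ) (m : ℤ) :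
    ((u ^ m : (PDO d)ˣ) : PDO d).1 = pdoZpow d (u : PDO d).1 ((u⁻¹ : (PDO d)ˣ) : PDO d).1 m := by
  unfold pdoZpow
  split_ifs with h
  · obtain ⟨k, rfl⟩ := Int.eq_ofNat_of_zero_le h
    rw [zpow_natCast, Units.val_pow_eq_pow_val, PDO.val_pow]
    rfl
  · obtain ⟨k, hk⟩ : ∃ k : ℕ, m = -k := ⟨(-m).toNat, by omega⟩
    subst hk
    rw [zpow_neg, zpow_natCast, ← inv_pow, Units.val_pow_eq_pow_val, PDO.val_pow, neg_neg]
    rfl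

theorem PDO.val_nsmul (d : Derivation ℤ A A) (a : PDO d) (n : ℕ) :
    (n • a).1 = n • a.1 := by
  induction n with
  | zero => rw [zero_smul, zero_smul]; rfl
  | succ n ih => rw [succ_nsmul, succ_nsmul, PDO.val_add, ih]

theorem pdoNegPart_add (a b : ℤ → A) : pdoNegPart (a + b) = pdoNegPart a + pdoNegPart b := by
  funext k
  simp only [pdoNegPart, Pi.add_apply]
  split_ifs <;> simp

theorem pdoNegPart_neg (a : ℤ → A) : pdoNegPart (-a) = -pdoNegPart a := by
  funext k
  simp only [pdoNegPart, Pi.neg_apply]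
  split_ifs <;> simp

/-- The negative part as an additive map on the ring of operators. -/
def PDO.neg {d : Derivation ℤ A A} (a : PDO d) : PDO d :=
  ⟨pdoNegPart a.1, by
    obtain ⟨N, h⟩ := a.2
    exact ⟨N, fun i hi => by simp [pdoNegPart, h i hi]⟩⟩

theorem PDO.neg_add {d : Derivation ℤ A A} (a b : PDO d) :
    (a + b).neg = a.neg + b.neg :=
  PDO.ext' (pdoNegPart_add _ _)

theorem PDO.neg_neg' {d : Derivation ℤ A A} (a : PDO d) : (-a).neg = -a.neg :=
  PDO.ext' (pdoNegPart_neg _)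

theorem PDO.neg_sub {d : Derivation ℤ A A} (a b : PDO d) :
    (a - b).neg = a.neg - b.neg := by
  rw [sub_eq_add_neg, PDO.neg_add, PDO.neg_neg', ← sub_eq_add_neg]

theorem PDO.neg_idem {d : Derivation ℤ A A} (a : PDO d) : a.neg.neg = a.neg := by
  apply PDO.ext'
  funext k
  simp only [PDO.neg, pdoNegPart]
  split_ifs <;> rfl

theorem PDO.neg_mul_eq_zero {d : Derivation ℤ A A} (a b : PDO d) (ha : a.neg = 0)
    (hb : b.neg = 0) : (a * b).neg = 0 :=
  PDO.ext' (pdoNegPart_mul d _ _ a.2 b.2 (congrArg Subtype.val ha) (congrArg Subtype.val hb))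

theorem PDO.neg_one {d : Derivation ℤ A A} : (1 : PDO d).neg = 0 := by
  apply PDO.ext'
  funext k
  simp only [PDO.neg, PDO.val_one, PDO.val_zero, pdoNegPart, pdoOne, Pi.zero_apply]
  split_ifs <;> first | rfl | omega

theorem PDO.neg_pow_eq_zero {d : Derivation ℤ A A} (a : PDO d) (ha : a.neg = 0) (k : ℕ) :
    (a ^ k).neg = 0 := by
  induction k with
  | zero => rw [pow_zero, PDO.neg_one]
  | succ k ih => rw [pow_succ, PDO.neg_mul_eq_zero _ _ ih ha]

/-- The commutator computation in an arbitrary ring. -/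
theorem comm_pow_of_comm_eq_one {R : Type*} [Ring R] (L M : R) (h : L * M - M * L = 1) (k : ℕ) :
    L ^ (k + 1) * M - M * L ^ (k + 1) = (k + 1) • L ^ k := by
  induction k with
  | zero => simpa using h
  | succ k ih =>
    have e : L ^ (k + 1 + 1) * M - M * L ^ (k + 1 + 1)
        = L * (L ^ (k + 1) * M - M * L ^ (k + 1)) + (L * M - M * L) * L ^ (k + 1) := by
      rw [pow_succ' L (k + 1)]
      noncomm_ring
    rw [e, ih, h, mul_smul_comm, ← pow_succ', one_mul, ← succ_nsmul]

theorem comm_additional {R : Type*} [Ring R] (u : Rˣ) (M : R) (h : (u : R) * M - M * u = 1)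
    (n : ℕ) (hn : 1 ≤ n) (j : ℤ) :
    (M * ((u ^ (2 * (n : ℤ) * j + 1) : Rˣ) : R) + ((u ^ (2 * (n : ℤ) * j + 1) : Rˣ) : R) * M)
        * (u : R) ^ (2 * n)
      - (u : R) ^ (2 * n) * (M * ((u ^ (2 * (n : ℤ) * j + 1) : Rˣ) : R)
        + ((u ^ (2 * (n : ℤ) * j + 1) : Rˣ) : R) * M)
      = -((4 * n) • ((u ^ (2 * (n : ℤ) * (j + 1)) : Rˣ) : R)) := by
  obtain ⟨k, hk⟩ : ∃ k, 2 * n = k + 1 := ⟨2 * n - 1, by omega⟩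
  have hc := comm_pow_of_comm_eq_one (u : R) M h k
  rw [← hk] at hc
  have e1 : ((u ^ (2 * (n : ℤ) * j + 1) : Rˣ) : R) * (u : R) ^ (2 * n)
      = (u : R) ^ (2 * n) * ((u ^ (2 * (n : ℤ) * j + 1) : Rˣ) : R) := by
    rw [← Units.val_pow_eq_pow_val, ← Units.val_mul, ← Units.val_mul, ← zpow_natCast,
      ← zpow_add, ← zpow_add, add_comm]
  have e2 : (u : R) ^ k * ((u ^ (2 * (n : ℤ) * j + 1) : Rˣ) : R)
      = ((u ^ (2 * (n : ℤ) * (j + 1)) : Rˣ) : R) := by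
    rw [← Units.val_pow_eq_pow_val, ← Units.val_mul, ← zpow_natCast, ← zpow_add]
    congr 2
    have : (k : ℤ) = 2 * n - 1 := by omega
    rw [this]; ring
  have e3 : ((u ^ (2 * (n : ℤ) * j + 1) : Rˣ) : R) * (u : R) ^ k
      = ((u ^ (2 * (n : ℤ) * (j + 1)) : Rˣ) : R) := by
    rw [← Units.val_pow_eq_pow_val, ← Units.val_mul, ← zpow_natCast, ← zpow_add]
    congr 2
    have : (k : ℤ) = 2 * n - 1 := by omega
    rw [this]; ring
  generalize ((u ^ (2 * (n : ℤ) * j + 1) : Rˣ) : R) = Z at *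
  generalize ((u ^ (2 * (n : ℤ) * (j + 1)) : Rˣ) : R) = W at *
  generalize hP : (u : R) ^ (2 * n) = P at *
  have e : (M * Z + Z * M) * P - P * (M * Z + Z * M)
      = -((P * M - M * P) * Z + Z * (P * M - M * P)) + (M * (Z * P - P * Z) + (Z * P - P * Z) * M) := by
    noncomm_ring
  rw [e, hc, e1, sub_self, mul_zero, zero_mul, add_zero, add_zero, smul_mul_assoc, mul_smul_comm,
    e2, e3, ← add_nsmul]
  congr 2
  omega

/-- Let `L = D + ∑_{i≥1} v_i D^{-i}` with `L* = -L` and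
`(L^{2n})_- = 0` (`n ≥ 1`), let `L⁻¹` be its inverse, and let `M` (in the
algebra of pseudo-differential operators) satisfy `[L, M] = 1` and `M* = M`.
With `A_{1,l} = M L^l + L^l M`, for every `j ≥ -1` one has
`[-(A_{1,2nj+1})_-, L^{2n}]_- = 4n (L^{2n(j+1)})_-` and this vanishes. -/
theorem reduced_additional_symmetry (d : A → A)
    (hd_add : ∀ x y : A, d (x + y) = d x + d y)
    (hd_leibniz : ∀ x y : A, d (x * y) = d x * y + x * d y)
    (n : ℕ) (hn : 1 ≤ n)
    (L : ℤ → A) (hL1 : L 1 = 1) (hL0 : L 0 = 0) (hLhigh : ∀ i : ℤ, 2 ≤ i → L i = 0)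
    (hLadj : pdoAdj d L = -L)
    (hL2n : pdoNegPart (pdoPow d L (2 * n)) = 0)
    (Li : ℤ → A) (hLi : pdoBdd Li)
    (hLLi : pdoMul d L Li = pdoOne) (hLiL : pdoMul d Li L = pdoOne)
    (M : ℤ → A) (hM : pdoBdd M) (hMadj : pdoAdj d M = M)
    (hLM : pdoMul d L M - pdoMul d M L = pdoOne)
    (j : ℤ) (hj : -1 ≤ j) :
    pdoNegPart
        (pdoMul d (-(pdoNegPart
            (pdoMul d M (pdoZpow d L Li (2 * (n : ℤ) * j + 1))
              + pdoMul d (pdoZpow d L Li (2 * (n : ℤ) * j + 1)) M)))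
          (pdoPow d L (2 * n))
        - pdoMul d (pdoPow d L (2 * n))
            (-(pdoNegPart
              (pdoMul d M (pdoZpow d L Li (2 * (n : ℤ) * j + 1))
                + pdoMul d (pdoZpow d L Li (2 * (n : ℤ) * j + 1)) M))))
      = ((4 * n : ℕ) : A) • pdoNegPart (pdoZpow d L Li (2 * (n : ℤ) * (j + 1)))
    ∧ pdoNegPart (pdoZpow d L Li (2 * (n : ℤ) * (j + 1))) = 0 := by
  let D₀ : Derivation ℤ A A := Derivation.mk' (AddMonoidHom.mk' d hd_add).toIntLinearMap
    (fun x y => by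
      change d (x * y) = x * d y + y * d x
      rw [hd_leibniz]
      ring)
  obtain ⟨D, hD⟩ : ∃ D : Derivation ℤ A A, ⇑D = d := ⟨D₀, rfl⟩
  clear D₀
  subst hD
  let u : (PDO D)ˣ :=
    { val := ⟨L, 1, fun i hi => hLhigh i (by omega)⟩
      inv := ⟨Li, hLi⟩
      val_inv := PDO.ext' hLLi
      inv_val := PDO.ext' hLiL }
  let m : PDO D := ⟨M, hM⟩
  have hum : (u : PDO D) * m - m * u = 1 := PDO.ext' hLM
  have hP : ((u : PDO D) ^ (2 * n)).neg = 0 := by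
    apply PDO.ext'
    change pdoNegPart ((u : PDO D) ^ (2 * n)).1 = 0
    rw [PDO.val_pow]
    exact hL2n
  have hW : ((u ^ (2 * (n : ℤ) * (j + 1)) : (PDO D)ˣ) : PDO D).neg = 0 := by
    obtain ⟨s, hs⟩ : ∃ s : ℕ, j + 1 = s := ⟨(j + 1).toNat, by omega⟩
    have : u ^ (2 * (n : ℤ) * (j + 1)) = (u ^ (2 * n)) ^ s := by
      rw [hs, ← pow_mul, ← zpow_natCast]
      push_cast
      rfl
    rw [this, Units.val_pow_eq_pow_val, Units.val_pow_eq_pow_val]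
    exact PDO.neg_pow_eq_zero _ hP s
  have hW' : pdoNegPart (pdoZpow D L Li (2 * (n : ℤ) * (j + 1))) = 0 := by
    have := congrArg Subtype.val hW
    change pdoNegPart ((u ^ (2 * (n : ℤ) * (j + 1)) : (PDO D)ˣ) : PDO D).1 = 0 at this
    rw [PDO.val_zpow] at this
    exact this
  refine ⟨?_, hW'⟩
  rw [hW', smul_zero]
  have hcomm := comm_additional u m hum n hn j
  have hZ := PDO.val_zpow D u (2 * (n : ℤ) * j + 1)
  generalize ((u ^ (2 * (n : ℤ) * j + 1) : (PDO D)ˣ) : PDO D) = Z at hcomm hZ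
  have hPv := PDO.val_pow D (u : PDO D) (2 * n)
  change Z.1 = pdoZpow D L Li (2 * (n : ℤ) * j + 1) at hZ
  change _ = pdoPow D L (2 * n) at hPv
  rw [← hZ, ← hPv]
  generalize (u : PDO D) ^ (2 * n) = P at hcomm hP
  generalize hB : m * Z + Z * m = B at hcomm
  have hWn : ∀ t : ℕ, (t • ((u ^ (2 * (n : ℤ) * (j + 1)) : (PDO D)ˣ) : PDO D)).neg = 0 := by
    intro t
    induction t with
    | zero => rw [zero_smul, ← sub_self (1 : PDO D), PDO.neg_sub, sub_self, sub_self]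
    | succ t ih => rw [succ_nsmul, PDO.neg_add, ih, hW, add_zero]
  have hplus : (B - B.neg).neg = 0 := by rw [PDO.neg_sub, PDO.neg_idem, sub_self]
  have main : (-B.neg * P - P * -B.neg).neg = 0 := by
    have e : -B.neg * P - P * -B.neg
        = ((B - B.neg) * P - P * (B - B.neg)) - (B * P - P * B) := by noncomm_ring
    rw [e, hcomm, PDO.neg_sub, PDO.neg_sub, PDO.neg_mul_eq_zero _ _ hplus hP,
      PDO.neg_mul_eq_zero _ _ hP hplus, PDO.neg_neg', hWn]
    simp
  subst hB
  exact congrArg Subtype.val main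
end
end
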